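/- In the twin prime power construction, for all nonzero β, β' ∈ K with β + β' ≠ 0, one has N_β · N_{β'} = q·N_{ββ'/(β+β')} + 2·(I_{q+2} ⊗ J_{q²}) + (q−1)·J_{(q+2)q²}. -/

import Mathlib

open Matrix Kronecker BigOperators

noncomputable section

/-- The all-ones matrix. -/
def allOnes (n : Type*) : Matrix n n ℝ := Matrix.of fun _ _ => 1

/-- The auxiliary matrices `C_a` for `a ∈ F ∪ {y}` (formally `Option F`, with `none`
playing the role of the extra symbol `y`, so that `C_y = I_q ⊗ J_q`). -/
def auxC {F : Type*} [Field F] [Fintype F] [DecidableEq F] :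
    Option F → Matrix (F × F) (F × F) ℝ
  | some α => Matrix.of fun p r => if r.2 - p.2 = α * (r.1 - p.1) then 1 else 0
  | none => Matrix.of fun p r => if p.1 = r.1 then 1 else 0

/-- The permutation matrix `P_{β,γ}` with `(a,b)`-entry `1` iff `β·(−a+b) = γ`. -/
def permP {K : Type*} [Field K] [DecidableEq K] (β γ : K) : Matrix K K ℝ :=
  Matrix.of fun a b => if β * (-a + b) = γ then 1 else 0

/-- The matrix `N_β = Σ_{γ∈K∖{0}} P_{β,γ} ⊗ C_{ψ(γ)}` of the twin prime power
construction, where `ψ : K∖{0} → F ∪ {y}` is a fixed bijection. -/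
def NN {F K : Type*} [Field F] [Fintype F] [DecidableEq F]
    [Field K] [Fintype K] [DecidableEq K]
    (ψ : {x : K // x ≠ 0} ≃ Option F) (β : K) :
    Matrix (K × (F × F)) (K × (F × F)) ℝ :=
  ∑ γ : {x : K // x ≠ 0}, permP β (γ : K) ⊗ₖ auxC (ψ γ)



lemma auxC_mul_self {F : Type*} [Field F] [Fintype F] [DecidableEq F] (x : Option F)
    (p r : F × F) :
    (auxC x * auxC x) p r = (Fintype.card F : ℝ) * auxC x p r := by
  rw [Matrix.mul_apply, Fintype.sum_prod_type]
  cases x with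
  | none =>
    simp only [auxC, Matrix.of_apply]
    by_cases h : p.1 = r.1 <;> simp [h]
  | some α =>
    simp only [auxC, Matrix.of_apply]
    have : ∀ x y : F, ((if y - p.2 = α * (x - p.1) then (1:ℝ) else 0) *
        (if r.2 - y = α * (r.1 - x) then 1 else 0)) =
        if y = p.2 + α * (x - p.1) then (if r.2 - p.2 = α * (r.1 - p.1) then 1 else 0) else 0 := by
      intro x y
      by_cases h : y = p.2 + α * (x - p.1)
      · have h1 : y - p.2 = α * (x - p.1) := by rw [h]; ring
        have h2 : r.2 - y = α * (r.1 - x) ↔ r.2 - p.2 = α * (r.1 - p.1) := by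
          constructor
          · intro h3; linear_combination h3 + h
          · intro h3; linear_combination h3 - h
        simp only [if_pos h, if_pos h1, h2, one_mul]
      · have h1 : ¬ (y - p.2 = α * (x - p.1)) := fun h1 => h (by linear_combination h1)
        simp only [if_neg h, if_neg h1, zero_mul]
    simp only [this]
    simp

lemma auxC_mul_ne {F : Type*} [Field F] [Fintype F] [DecidableEq F] (x y : Option F)
    (hxy : x ≠ y) (p r : F × F) :
    (auxC x * auxC y) p r = 1 := by
  have key : ∃ z : F × F, ∀ w : F × F, auxC x p w * auxC y w r = if w = z then 1 else 0 := by
    cases x with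
    | none =>
      cases y with
      | none => exact absurd rfl hxy
      | some α =>
        refine ⟨(p.1, r.2 - α * (r.1 - p.1)), fun w => ?_⟩
        simp only [auxC, Matrix.of_apply, ← ite_and, mul_ite, mul_one, mul_zero]
        refine if_congr ?_ rfl rfl
        rw [Prod.ext_iff]
        constructor
        · rintro ⟨h1, h2⟩
          refine ⟨by grind, by grind⟩
        · rintro ⟨h1, h2⟩
          refine ⟨by grind, by grind⟩
    | some α =>
      cases y with
      | none =>
        refine ⟨(r.1, p.2 + α * (r.1 - p.1)), fun w => ?_⟩
        simp only [auxC, Matrix.of_apply, ← ite_and, mul_ite, mul_one, mul_zero]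
        refine if_congr ?_ rfl rfl
        rw [Prod.ext_iff]
        constructor
        · rintro ⟨h1, h2⟩
          refine ⟨by grind, by grind⟩
        · rintro ⟨h1, h2⟩
          refine ⟨by grind, by grind⟩
      | some δ =>
        have hne : α - δ ≠ 0 := fun h => hxy (by rw [sub_eq_zero.mp h])
        obtain ⟨t, ht⟩ : ∃ t, t * (α - δ) = r.2 - p.2 - δ * r.1 + α * p.1 :=
          ⟨_, div_mul_cancel₀ _ hne⟩
        refine ⟨(t, p.2 + α * (t - p.1)), fun w => ?_⟩
        simp only [auxC, Matrix.of_apply, ← ite_and, mul_ite, mul_one, mul_zero]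
        refine if_congr ?_ rfl rfl
        rw [Prod.ext_iff]
        constructor
        · rintro ⟨h1, h2⟩
          have h3 : w.1 = t := by
            apply mul_right_cancel₀ hne
            rw [ht]; grind
          refine ⟨h3, by grind⟩
        · rintro ⟨h1, h2⟩
          simp only at h1 h2
          subst h1
          refine ⟨by grind, by grind⟩
  obtain ⟨z, hz⟩ := key
  rw [Matrix.mul_apply]
  simp [hz]

def DD {F K : Type*} [Field F] [Fintype F] [DecidableEq F]
    [Field K] [DecidableEq K]
    (ψ : {x : K // x ≠ 0} ≃ Option F) (k : K) : Matrix (F × F) (F × F) ℝ :=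
  if h : k ≠ 0 then auxC (ψ ⟨k, h⟩) else 0

lemma NN_apply {F K : Type*} [Field F] [Fintype F] [DecidableEq F]
    [Field K] [Fintype K] [DecidableEq K]
    (ψ : {x : K // x ≠ 0} ≃ Option F) (β : K) (a b : K) (p r : F × F) :
    NN ψ β (a, p) (b, r) = DD ψ (β * (-a + b)) p r := by
  unfold NN DD
  rw [Matrix.sum_apply]
  simp only [permP, Matrix.kroneckerMap_apply, Matrix.of_apply]
  split_ifs with h
  · rw [Finset.sum_eq_single ⟨_, h⟩]
    · simp
    · intro γ _ hγ
      rw [if_neg (fun e => hγ (Subtype.ext e.symm)), zero_mul]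
    · simp
  · apply Finset.sum_eq_zero
    intro γ _
    rw [if_neg (fun e => h (by rw [e]; exact γ.2)), zero_mul]

lemma DD_mul {F K : Type*} [Field F] [Fintype F] [DecidableEq F]
    [Field K] [DecidableEq K]
    (ψ : {x : K // x ≠ 0} ≃ Option F) (k l : K) (p r : F × F) :
    (DD ψ k * DD ψ l) p r =
      1 - (if k = 0 then 1 else 0) - (if l = 0 then 1 else 0)
        + (if k = 0 then (if l = 0 then 1 else 0) else 0)
        + (if k = l then (Fintype.card F : ℝ) * DD ψ k p r
          - (1 - (if k = 0 then 1 else 0)) else 0) := by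
  by_cases hk : k = 0
  · by_cases hl : l = 0
    · simp [hk, hl, DD]
    · simp [hk, hl, Ne.symm hl, DD]
  · by_cases hl : l = 0
    · simp [hk, hl, DD]
    · by_cases hkl : k = l
      · subst hkl
        simp only [DD, ne_eq, hk, not_false_eq_true, dif_pos, auxC_mul_self]
        simp
      · have : (DD ψ k * DD ψ l) p r = 1 := by
          simp only [DD, ne_eq, hk, hl, not_false_eq_true, dif_pos]
          apply auxC_mul_ne
          intro h
          exact hkl (congrArg Subtype.val (ψ.injective h))
        rw [this]
        simp [hk, hl, hkl]

/-- In the twin prime power construction, for nonzero `β, β'` with `β + β' ≠ 0`,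
`N_β · N_{β'} = q·N_{ββ'/(β+β')} + 2·(I_{q+2} ⊗ J_{q²}) + (q−1)·J`. -/
theorem NN_mul {F K : Type*} [Field F] [Fintype F] [DecidableEq F]
    [Field K] [Fintype K] [DecidableEq K]
    (hcard : Fintype.card K = Fintype.card F + 2)
    (ψ : {x : K // x ≠ 0} ≃ Option F) (β β' : K) (hβ : β ≠ 0) (hβ' : β' ≠ 0)
    (hs : β + β' ≠ 0) :
    NN ψ β * NN ψ β' =
      (Fintype.card F : ℝ) • NN ψ (β * β' / (β + β')) +
        (2 : ℝ) • ((1 : Matrix K K ℝ) ⊗ₖ allOnes (F × F)) +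
        ((Fintype.card F : ℝ) - 1) • allOnes (K × (F × F)) := by
  ext ⟨a, p⟩ ⟨c, r⟩
  rw [Matrix.mul_apply, Fintype.sum_prod_type]
  simp only [NN_apply, ← Matrix.mul_apply, DD_mul, Matrix.add_apply, Matrix.smul_apply,
    Matrix.kroneckerMap_apply, allOnes, Matrix.of_apply, smul_eq_mul, mul_one]
  have e1 : ∀ b : K, β * (-a + b) = 0 ↔ b = a := fun b => by
    rw [mul_eq_zero, or_iff_right hβ, neg_add_eq_zero, eq_comm]
  have e2 : ∀ b : K, β' * (-b + c) = 0 ↔ b = c := fun b => by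
    rw [mul_eq_zero, or_iff_right hβ', neg_add_eq_zero]
  obtain ⟨b0, hb0⟩ : ∃ b0, b0 * (β + β') = β' * c + β * a := ⟨_, div_mul_cancel₀ _ hs⟩
  have e3 : ∀ b : K, β * (-a + b) = β' * (-b + c) ↔ b = b0 := fun b => by
    constructor
    · intro h
      apply mul_right_cancel₀ hs
      linear_combination h - hb0
    · rintro rfl
      linear_combination hb0
  have e4 : β * (-a + b0) = β * β' / (β + β') * (-a + c) := by
    field_simp
    linear_combination hb0
  have e5 : b0 = a ↔ a = c := by
    rw [← e1 b0]
    constructor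
    · intro h
      have h1 := (e1 b0).1 h
      have h2 := (e2 b0).1 (((e3 b0).2 rfl).symm.trans h)
      exact h1.symm.trans h2
    · intro h
      rw [e4, h]; simp
  simp only [e1, e2, e3, Finset.sum_add_distrib, Finset.sum_sub_distrib, Finset.sum_ite_eq',
    Finset.mem_univ, if_true, e5, e4, Matrix.one_apply]
  simp only [Finset.sum_const, Finset.card_univ, hcard, nsmul_eq_mul]
  push_cast
  split_ifs <;> ring
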